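/- There exists an absolute constant C > 0 with the following property. Let q ≥ 1, let d, N ∈ ℕ satisfy N^{−11} ≤ κ_q(d,N) ≤ e^{−12/q}, and set n = N^q. Let k ≥ 2 be an integer, let u ∈ U(B_N^q ∩ ℤ^d), and let l, m ∈ {0, 1, …, ⌊n⌋} be integers with l ≥ κ_q(d,N)^{q/22}·n / k^6. Then |A(u, l, m)| ≤ C·n^{−3}·|A(u, 0, m + ⌊l·k^q⌋)|. -/

import Mathlib

open Classical in
noncomputable def latticeBall (q : ℝ) (d : ℕ) (t : ℝ) : Finset (Fin d → ℤ) :=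
  (Finset.Icc (fun _ => -(⌈t⌉₊ : ℤ)) (fun _ => (⌈t⌉₊ : ℤ))).filter
    (fun x => ∑ i, |(x i : ℝ)| ^ q ≤ t ^ q)


/-- `u(x)`: zero out the coordinates whose absolute value is `1` or `k`. -/
def uPart (d : ℕ) (k : ℕ) (x : Fin d → ℤ) : Fin d → ℤ :=
  fun j => if |x j| = 1 ∨ |x j| = (k : ℤ) then 0 else x j

open Classical in
/-- The set `A(u, l, m)`. -/
noncomputable def Aset (q : ℝ) (d N : ℕ) (k : ℕ) (u : Fin d → ℤ) (l m : ℕ) :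
    Finset (Fin d → ℤ) :=
  (latticeBall q d N).filter (fun x => uPart d k x = u ∧
    (Finset.univ.filter (fun i => |x i| = (k : ℤ))).card = l ∧
    (Finset.univ.filter (fun i => |x i| = 1)).card = m)

lemma mem_latticeBall_iff (q : ℝ) (hq : 1 ≤ q) (d N : ℕ) (x : Fin d → ℤ) :
    x ∈ latticeBall q d N ↔ ∑ i, |(x i : ℝ)| ^ q ≤ (N : ℝ) ^ q := by
  unfold latticeBall
  rw [Finset.mem_filter]
  refine ⟨fun h => h.2, fun h => ⟨?_, h⟩⟩
  have key : ∀ i, |x i| ≤ (N : ℤ) := by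
    intro i
    have h1 : |(x i : ℝ)| ^ q ≤ (N : ℝ) ^ q :=
      le_trans (Finset.single_le_sum (f := fun i => |(x i : ℝ)| ^ q)
        (fun j _ => Real.rpow_nonneg (abs_nonneg _) _) (Finset.mem_univ i)) h
    have h2 : |(x i : ℝ)| ≤ N :=
      (Real.rpow_le_rpow_iff (abs_nonneg _) (Nat.cast_nonneg _) (by linarith)).1 h1
    exact_mod_cast h2
  rw [Finset.mem_Icc]
  simp only [Nat.ceil_natCast]
  exact ⟨fun i => (abs_le.1 (key i)).1, fun i => (abs_le.1 (key i)).2⟩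

lemma sum_split (q : ℝ) (hq : 1 ≤ q) (d k : ℕ) (hk : 2 ≤ k) (x : Fin d → ℤ) :
    ∑ i, |(x i : ℝ)| ^ q = ∑ i, |((uPart d k x) i : ℝ)| ^ q
      + ((Finset.univ.filter (fun i => |x i| = (k : ℤ))).card : ℝ) * (k : ℝ) ^ q
      + ((Finset.univ.filter (fun i => |x i| = 1)).card : ℝ) := by
  have h1 : ∀ i, |(x i : ℝ)| ^ q = |((uPart d k x) i : ℝ)| ^ q
      + (if |x i| = (k : ℤ) then (k : ℝ) ^ q else 0) + (if |x i| = 1 then 1 else 0) := by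
    intro i
    have h0 : (0 : ℝ) ^ q = 0 := Real.zero_rpow (by linarith)
    unfold uPart
    by_cases ha : |x i| = 1
    · have hb : ¬ |x i| = (k : ℤ) := by omega
      have hc : |(x i : ℝ)| = 1 := by exact_mod_cast ha
      have hd : (1 : ℤ) ≠ k := by omega
      simp [ha, hc, h0, hd]
    · by_cases hb : |x i| = (k : ℤ)
      · have hc : |(x i : ℝ)| = k := by exact_mod_cast hb
        have hd : (k : ℤ) ≠ 1 := by omega
        have he : k ≠ 1 := by omega
        simp [hb, hc, h0, he]
      · simp [ha, hb]
  rw [Finset.sum_congr rfl (fun i _ => h1 i), Finset.sum_add_distrib, Finset.sum_add_distrib]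
  congr 2
  · rw [← Finset.sum_filter, Finset.sum_const, nsmul_eq_mul]
  · rw [← Finset.sum_filter, Finset.sum_const, nsmul_eq_mul, mul_one]

lemma card_supp_le (q : ℝ) (d : ℕ) (u : Fin d → ℤ) (hq : 1 ≤ q) :
    ((Finset.univ.filter (fun i => u i ≠ 0)).card : ℝ) ≤ ∑ i, |(u i : ℝ)| ^ q := by
  rw [Finset.card_eq_sum_ones, Nat.cast_sum, Finset.sum_filter]
  apply Finset.sum_le_sum
  intro i _
  split_ifs with h
  · have : (1 : ℝ) ≤ |(u i : ℝ)| := by exact_mod_cast Int.one_le_abs h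
    simpa using Real.one_le_rpow this (by linarith)
  · exact Real.rpow_nonneg (abs_nonneg _) _

lemma upper (q : ℝ) (d N k : ℕ) (hk : 2 ≤ k) (u : Fin d → ℤ) (l m : ℕ) :
    (Aset q d N k u l m).card ≤
      ((Finset.univ.filter (fun i => u i = 0)).card).choose l *
      (((Finset.univ.filter (fun i => u i = 0)).card - l).choose m * 2 ^ (l + m)) := by
  classical
  set Z := Finset.univ.filter (fun i => u i = 0) with hZ
  let T : Finset (Σ _ : Finset (Fin d), Σ _ : Finset (Fin d), Finset (Fin d)) :=
    (Finset.powersetCard l Z).sigma fun K =>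
      (Finset.powersetCard m (Z \ K)).sigma fun O => (K ∪ O).powerset
  have hT : T.card = Z.card.choose l * ((Z.card - l).choose m * 2 ^ (l + m)) := by
    simp only [T]
    rw [Finset.card_sigma]
    rw [← Finset.card_powersetCard, ← smul_eq_mul, ← Finset.sum_const]
    apply Finset.sum_congr rfl
    intro K hK
    rw [Finset.mem_powersetCard] at hK
    have hc : (Z \ K).card = Z.card - l := by
      rw [Finset.card_sdiff_of_subset hK.1, hK.2]
    rw [Finset.card_sigma, ← hc, ← Finset.card_powersetCard m, ← smul_eq_mul, ← Finset.sum_const]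
    apply Finset.sum_congr rfl
    intro O hO
    rw [Finset.mem_powersetCard] at hO
    rw [Finset.card_powerset, Finset.card_union_of_disjoint, hK.2, hO.2]
    exact (Finset.disjoint_sdiff).mono_right hO.1
  rw [← hT]
  apply Finset.card_le_card_of_injOn (fun x =>
    ⟨Finset.univ.filter (fun i => |x i| = (k : ℤ)), Finset.univ.filter (fun i => |x i| = 1),
      Finset.univ.filter (fun i => 0 < x i ∧ (|x i| = (k : ℤ) ∨ |x i| = 1))⟩)
  · intro x hx
    simp only [Aset, Finset.coe_filter, Set.mem_setOf_eq] at hx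
    obtain ⟨-, hu, hl, hm⟩ := hx
    have hu' : ∀ i, (|x i| = 1 ∨ |x i| = (k : ℤ)) → u i = 0 := by
      intro i hi
      rw [← hu]; simp [uPart, hi]
    simp only [T, Finset.coe_sigma, Set.mem_sigma_iff, Finset.mem_coe, Finset.mem_powersetCard,
      Finset.mem_powerset]
    refine ⟨⟨?_, by convert hl⟩, ⟨?_, by convert hm⟩, ?_⟩
    · intro i hi
      simp only [Finset.mem_filter, Finset.mem_univ, true_and] at hi
      simp [hZ, hu' i (Or.inr hi)]
    · intro i hi
      simp only [Finset.mem_filter, Finset.mem_univ, true_and] at hi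
      have : (1 : ℤ) ≠ k := by omega
      simp [hZ, hu' i (Or.inl hi), hi, this]
    · intro i hi
      simp only [Finset.mem_filter, Finset.mem_univ, true_and, Finset.mem_union] at hi ⊢
      exact hi.2
  · intro x hx y hy hxy
    simp only [Aset, Finset.coe_filter, Set.mem_setOf_eq] at hx hy
    obtain ⟨-, hu, -, -⟩ := hx
    obtain ⟨-, hv, -, -⟩ := hy
    simp only [Sigma.mk.injEq, heq_eq_eq] at hxy
    obtain ⟨h1, h2, h3⟩ := hxy
    funext i
    have a1 := Finset.ext_iff.1 h1 i
    have a2 := Finset.ext_iff.1 h2 i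
    have a3 := Finset.ext_iff.1 h3 i
    simp only [Finset.mem_filter, Finset.mem_univ, true_and] at a1 a2 a3
    have a4 : uPart d k x i = uPart d k y i := by rw [hu, hv]
    unfold uPart at a4
    grind

lemma lower (q : ℝ) (hq : 1 ≤ q) (d N k : ℕ) (hk : 2 ≤ k) (u : Fin d → ℤ) (M : ℕ)
    (hu : ∀ i, |u i| ≠ 1 ∧ |u i| ≠ (k : ℤ))
    (hn : ∑ i, |(u i : ℝ)| ^ q + M ≤ (N : ℝ) ^ q) :
    ((Finset.univ.filter (fun i => u i = 0)).card).choose M * 2 ^ M ≤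
      (Aset q d N k u 0 M).card := by
  classical
  set Z := Finset.univ.filter (fun i => u i = 0) with hZ
  let T : Finset (Σ _ : Finset (Fin d), Finset (Fin d)) :=
    (Finset.powersetCard M Z).sigma fun O => O.powerset
  have hT : T.card = Z.card.choose M * 2 ^ M := by
    simp only [T]
    rw [Finset.card_sigma]
    rw [← Finset.card_powersetCard, ← smul_eq_mul, ← Finset.sum_const]
    apply Finset.sum_congr rfl
    intro O hO
    rw [Finset.mem_powersetCard] at hO
    rw [Finset.card_powerset, hO.2]
  rw [← hT]
  let f : (Σ _ : Finset (Fin d), Finset (Fin d)) → (Fin d → ℤ) := fun p j =>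
    if j ∈ p.1 then (if j ∈ p.2 then 1 else -1) else u j
  have hf1 : ∀ p : (Σ _ : Finset (Fin d), Finset (Fin d)), ∀ j, |f p j| = 1 ↔ j ∈ p.1 := by
    intro p j
    simp only [f]
    have := (hu j).1
    split_ifs with h1 h2 <;> simp [*]
  have hfk : ∀ p : (Σ _ : Finset (Fin d), Finset (Fin d)), ∀ j, |f p j| ≠ (k : ℤ) := by
    intro p j
    simp only [f]
    have := (hu j).2
    have h3 : (1 : ℤ) ≠ k := by omega
    split_ifs with h1 h2 <;> simp [*]
  apply Finset.card_le_card_of_injOn f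
  · rintro p hp
    simp only [T, Finset.coe_sigma, Set.mem_sigma_iff, Finset.mem_coe, Finset.mem_powersetCard,
      Finset.mem_powerset] at hp
    obtain ⟨⟨hpZ, hpM⟩, -⟩ := hp
    have e1 : uPart d k (f p) = u := by
      funext j
      by_cases hj : j ∈ p.1
      · have := hpZ hj
        simp only [hZ, Finset.mem_filter, Finset.mem_univ, true_and] at this
        simp [uPart, (hf1 p j).2 hj, this]
      · have h1 := (hf1 p j).not.2 hj
        simp only [uPart, h1, hfk p j, or_self, if_false]
        simp [f, hj]
    have e2 : (Finset.univ.filter (fun i => |f p i| = (k : ℤ))).card = 0 := by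
      simp [hfk p]
    have e3 : (Finset.univ.filter (fun i => |f p i| = 1)).card = M := by
      rw [← hpM]; congr 1; ext j; simp [hf1 p j]
    simp only [Aset, Finset.coe_filter, Set.mem_setOf_eq]
    refine ⟨?_, e1, by convert e2, by convert e3⟩
    rw [mem_latticeBall_iff q hq, sum_split q hq d k hk, e1, e2, e3]
    simpa using hn
  · rintro ⟨O, P⟩ hp ⟨O', P'⟩ hp' h
    simp only [T, Finset.coe_sigma, Set.mem_sigma_iff, Finset.mem_coe, Finset.mem_powersetCard,
      Finset.mem_powerset] at hp hp'
    have hO : O = O' := by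
      ext j
      rw [← hf1 ⟨O, P⟩ j, ← hf1 ⟨O', P'⟩ j, h]
    subst hO
    have hP : P = P' := by
      ext j
      have := congrFun h j
      simp only [f] at this
      have h1 := @hp.2 j
      have h2 := @hp'.2 j
      grind
    rw [hP]

lemma binom_ineq (D l m L : ℕ) (hlL : l ≤ L) (n d : ℝ) (hd : 0 ≤ d)
    (h1 : ((m + L : ℕ) : ℝ) ≤ n) (hD : m + L ≤ D)
    (h2 : d ≤ 2 * ((D : ℝ) - m - L)) :
    ((D.choose l * ((D - l).choose m * 2 ^ (l + m)) : ℕ) : ℝ) * (l.factorial * d ^ (L - l))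
      ≤ n ^ L * ((D.choose (m + L) * 2 ^ (m + L) : ℕ) : ℝ) := by
  set E := (D - (l + m)).descFactorial (L - l) with hE
  set F := (m + L).descFactorial L with hF
  have key : D.choose l * (D - l).choose m * l.factorial * E = D.choose (m + L) * F := by
    apply Nat.eq_of_mul_eq_mul_right (Nat.factorial_pos m)
    have a1 : D.descFactorial l = l.factorial * D.choose l := Nat.descFactorial_eq_factorial_mul_choose _ _
    have a2 : (D - l).descFactorial m = m.factorial * (D - l).choose m :=
      Nat.descFactorial_eq_factorial_mul_choose _ _
    have a3 : D.descFactorial (m + L) = (m + L).factorial * D.choose (m + L) :=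
      Nat.descFactorial_eq_factorial_mul_choose _ _
    have a4 : (m).factorial * F = (m + L).factorial := by
      have := Nat.factorial_mul_descFactorial (n := m + L) (k := L) (by omega)
      simpa using this
    have a5 : (D - l).descFactorial m * D.descFactorial l = D.descFactorial (l + m) := by
      have := Nat.descFactorial_mul_descFactorial (n := D) (k := l) (m := l + m) (by omega)
      simpa using this
    have a6 : E * D.descFactorial (l + m) = D.descFactorial (m + L) := by
      have := Nat.descFactorial_mul_descFactorial (n := D) (k := l + m) (m := m + L) (by omega)
      rw [← this, hE]; congr 2; omega
    calc D.choose l * (D - l).choose m * l.factorial * E * m.factorial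
        = E * ((m.factorial * (D - l).choose m) * (l.factorial * D.choose l)) := by ring
      _ = (m + L).factorial * D.choose (m + L) := by rw [← a1, ← a2, a5, a6, a3]
      _ = _ := by rw [← a4]; ring
  have hFn : (F : ℝ) ≤ n ^ L := by
    calc (F : ℝ) ≤ ((m + L : ℕ) : ℝ) ^ L := by exact_mod_cast Nat.descFactorial_le_pow _ _
      _ ≤ n ^ L := by gcongr
  have hEd : d ^ (L - l) ≤ 2 ^ (L - l) * (E : ℝ) := by
    have b1 : (D - (l + m) + 1 - (L - l)) ^ (L - l) ≤ E := Nat.pow_sub_le_descFactorial _ _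
    have b2 : D - m - L ≤ D - (l + m) + 1 - (L - l) := by omega
    have b3 : (D - m - L) ^ (L - l) ≤ E := le_trans (Nat.pow_le_pow_left b2 _) b1
    have b4 : ((D - m - L : ℕ) : ℝ) = (D : ℝ) - m - L := by
      rw [Nat.sub_sub, Nat.cast_sub hD]; push_cast; ring
    calc d ^ (L - l) ≤ (2 * ((D - m - L : ℕ) : ℝ)) ^ (L - l) := by
          rw [b4]; gcongr
      _ = 2 ^ (L - l) * ((D - m - L : ℕ) : ℝ) ^ (L - l) := mul_pow _ _ _
      _ ≤ _ := by gcongr; exact_mod_cast b3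
  have keyR : (D.choose l : ℝ) * (D - l).choose m * l.factorial * E = D.choose (m + L) * F := by
    exact_mod_cast key
  have hpow : (2 : ℝ) ^ (l + m) * 2 ^ (L - l) = 2 ^ (m + L) := by
    rw [← pow_add]; congr 1; omega
  push_cast
  calc (D.choose l : ℝ) * ((D - l).choose m * 2 ^ (l + m)) * (l.factorial * d ^ (L - l))
      ≤ (D.choose l : ℝ) * ((D - l).choose m * 2 ^ (l + m)) * (l.factorial * (2 ^ (L - l) * (E : ℝ))) := by
        gcongr
    _ = ((D.choose l : ℝ) * (D - l).choose m * l.factorial * E) * (2 ^ (l + m) * 2 ^ (L - l)) := by ring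
    _ = F * (D.choose (m + L) * 2 ^ (m + L)) := by rw [keyR, hpow]; ring
    _ ≤ n ^ L * (D.choose (m + L) * 2 ^ (m + L)) := by gcongr

lemma final_num (n d : ℝ) (hn : 1 ≤ n) (hd : 0 < d) (h12 : n / d ≤ Real.exp (-12))
    (h11 : n ^ (-(11 : ℝ)) ≤ n / d) (k l L : ℕ) (hk : 2 ≤ k) (hL : k * l ≤ L)
    (hl : (n / d) ^ (1 / 22 : ℝ) * n / (k : ℝ) ^ 6 ≤ l) :
    n ^ L ≤ (36).factorial * n⁻¹ ^ 3 * (l.factorial * d ^ (L - l)) := by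
  have hn0 : 0 < n := by linarith
  have hρ : 0 < n / d := by positivity
  have hk0 : (0 : ℝ) < k := by exact_mod_cast (by omega : 0 < k)
  have hk2 : (2 : ℝ) ≤ k := by exact_mod_cast hk
  have hlpos : (0 : ℝ) < l := lt_of_lt_of_le (by positivity) hl
  have hl1 : (1 : ℝ) ≤ l := by
    have : 0 < l := by exact_mod_cast hlpos
    exact_mod_cast this
  have hlL : l ≤ L := le_trans (Nat.le_mul_of_pos_left l (by omega)) hL
  obtain ⟨r, hr⟩ : ∃ r, n / d = Real.exp (-r) := ⟨-Real.log (n / d), by simp [Real.exp_log hρ]⟩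
  have hr12 : 12 ≤ r := by
    rw [hr, Real.exp_le_exp] at h12; linarith
  have hρ22 : (n / d) ^ (1 / 22 : ℝ) = Real.exp (-(r / 22)) := by
    rw [hr, ← Real.exp_mul]; congr 1; ring
  have hl' : (n / d) ^ (1 / 22 : ℝ) * n ≤ l * (k : ℝ) ^ 6 := by
    rwa [div_le_iff₀ (by positivity)] at hl
  -- n / l bound
  have hnl : n / l ≤ Real.exp (6 * (k - 1) + r / 22) := by
    have hke : (k : ℝ) ≤ Real.exp (k - 1) := by
      have := Real.add_one_le_exp ((k : ℝ) - 1); linarith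
    have hk6 : (k : ℝ) ^ 6 ≤ Real.exp (6 * (k - 1)) := by
      calc (k : ℝ) ^ 6 ≤ (Real.exp (k - 1)) ^ 6 := by gcongr
        _ = _ := by rw [← Real.exp_nat_mul]; norm_num
    rw [div_le_iff₀ hlpos, Real.exp_add]
    rw [hρ22] at hl'
    calc n = Real.exp (r / 22) * (Real.exp (-(r / 22)) * n) := by
          rw [← mul_assoc, ← Real.exp_add]; simp
      _ ≤ Real.exp (r / 22) * (l * (k : ℝ) ^ 6) := by gcongr
      _ ≤ Real.exp (r / 22) * (l * Real.exp (6 * (k - 1))) := by gcongr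
      _ = _ := by ring
  have hfac : (l : ℝ) ^ l / l.factorial ≤ Real.exp l := Real.pow_div_factorial_le_exp _ hlpos.le _
  have hfac' : n ^ l / l.factorial ≤ Real.exp (l * (1 + 6 * (k - 1) + r / 22)) := by
    calc n ^ l / l.factorial = (n / l) ^ l * ((l : ℝ) ^ l / l.factorial) := by
          rw [div_pow]; field_simp
      _ ≤ (Real.exp (6 * (k - 1) + r / 22)) ^ l * Real.exp l := by gcongr
      _ = _ := by rw [← Real.exp_nat_mul, ← Real.exp_add]; congr 1; ring
  have hpow : (n / d) ^ (L - l) ≤ Real.exp (-(r * ((k - 1) * l))) := by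
    rw [hr, ← Real.exp_nat_mul, Real.exp_le_exp, Nat.cast_sub hlL]
    have : ((k : ℝ) * l) ≤ L := by exact_mod_cast hL
    nlinarith
  have hmain : n ^ l / l.factorial * (n / d) ^ (L - l) ≤ Real.exp (-(k * l)) := by
    calc _ ≤ Real.exp (l * (1 + 6 * (k - 1) + r / 22)) * Real.exp (-(r * ((k - 1) * l))) := by
          gcongr
      _ = Real.exp (l * (1 + 6 * (k - 1) + r / 22 - r * (k - 1))) := by
          rw [← Real.exp_add]; congr 1; ring
      _ ≤ _ := by
          rw [Real.exp_le_exp]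
          have : 1 + 6 * ((k : ℝ) - 1) + r / 22 - r * (k - 1) ≤ -k := by nlinarith
          nlinarith
  have hkl6 : n ^ (1 / 2 : ℝ) ≤ ((k : ℝ) * l) ^ 6 := by
    calc n ^ (1 / 2 : ℝ) = (n ^ (-(11 : ℝ))) ^ (1 / 22 : ℝ) * n := by
          rw [← Real.rpow_mul hn0.le]
          nth_rewrite 3 [← Real.rpow_one n]
          rw [← Real.rpow_add hn0]; norm_num
      _ ≤ (n / d) ^ (1 / 22 : ℝ) * n := by gcongr
      _ ≤ l * (k : ℝ) ^ 6 := hl'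
      _ ≤ (l : ℝ) ^ 6 * (k : ℝ) ^ 6 := by
          gcongr; exact le_self_pow₀ hl1 (by norm_num)
      _ = _ := by ring
  have hkl36 : n ^ 3 ≤ ((k : ℝ) * l) ^ 36 := by
    calc n ^ 3 = (n ^ (1 / 2 : ℝ)) ^ 6 := by
          rw [← Real.rpow_natCast, ← Real.rpow_natCast, ← Real.rpow_mul hn0.le]; norm_num
      _ ≤ (((k : ℝ) * l) ^ 6) ^ 6 := by gcongr
      _ = _ := by ring
  have hexp : Real.exp (-(k * l)) ≤ (36).factorial * n⁻¹ ^ 3 := by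
    have h := Real.pow_div_factorial_le_exp ((k : ℝ) * l) (by positivity) 36
    have hf : (0 : ℝ) < (36).factorial := by exact_mod_cast Nat.factorial_pos 36
    have h2 : n ^ 3 / (36).factorial ≤ Real.exp (k * l) :=
      le_trans (by gcongr) h
    rw [Real.exp_neg, inv_pow]
    calc (Real.exp (k * l))⁻¹ ≤ (n ^ 3 / (36).factorial)⁻¹ := by
          apply inv_anti₀ _ h2; positivity
      _ = _ := by rw [inv_div, div_eq_mul_inv]
  have hall := hmain.trans hexp
  have hd' : 0 < (l.factorial : ℝ) * d ^ (L - l) := by positivity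
  calc n ^ L = n ^ l / l.factorial * (n / d) ^ (L - l) * (l.factorial * d ^ (L - l)) := by
        rw [div_pow]
        have : n ^ L = n ^ l * n ^ (L - l) := by rw [← pow_add]; congr 1; omega
        rw [this]; field_simp
    _ ≤ _ := by gcongr


theorem stmt19 :
    ∃ C : ℝ, 0 < C ∧ ∀ (q : ℝ), 1 ≤ q → ∀ d N : ℕ, 0 < d → 0 < N →
      (N : ℝ) ^ (-(11 : ℝ)) ≤ (N : ℝ) / (d : ℝ) ^ (1 / q) →
      (N : ℝ) / (d : ℝ) ^ (1 / q) ≤ Real.exp (-12 / q) →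
      ∀ k : ℕ, 2 ≤ k →
      ∀ u ∈ (latticeBall q d N).image (uPart d k),
      ∀ l m : ℕ, (l : ℝ) ≤ (N : ℝ) ^ q → (m : ℝ) ≤ (N : ℝ) ^ q →
      ((N : ℝ) / (d : ℝ) ^ (1 / q)) ^ (q / 22) * (N : ℝ) ^ q / (k : ℝ) ^ 6 ≤ (l : ℝ) →
      ((Aset q d N k u l m).card : ℝ)
        ≤ C * ((N : ℝ) ^ q)⁻¹ ^ 3 *
          ((Aset q d N k u 0 (m + ⌊(l : ℝ) * (k : ℝ) ^ q⌋₊)).card : ℝ) := by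
  refine ⟨((36).factorial : ℝ), by exact_mod_cast Nat.factorial_pos 36, ?_⟩
  intro q hq d N hd hN h11 h12 k hk u _ l m _ _ hl
  have hq0 : 0 < q := by linarith
  have hN1 : (1 : ℝ) ≤ N := by exact_mod_cast hN
  have hdR : (0 : ℝ) < d := by exact_mod_cast hd
  set n : ℝ := (N : ℝ) ^ q with hn
  set L := ⌊(l : ℝ) * (k : ℝ) ^ q⌋₊ with hLdef
  have hn1 : 1 ≤ n := Real.one_le_rpow hN1 hq0.le
  have hκ0 : 0 ≤ (N : ℝ) / (d : ℝ) ^ (1 / q) := by positivity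
  have hκ : ((N : ℝ) / (d : ℝ) ^ (1 / q)) ^ q = n / d := by
    rw [Real.div_rpow (by positivity) (by positivity), ← Real.rpow_mul hdR.le]
    rw [one_div_mul_cancel hq0.ne', Real.rpow_one]
  have g12 : n / d ≤ Real.exp (-12) := by
    rw [← hκ]
    calc _ ≤ (Real.exp (-12 / q)) ^ q := by gcongr
      _ = _ := by rw [← Real.exp_mul]; congr 1; field_simp
  have g11 : n ^ (-(11 : ℝ)) ≤ n / d := by
    rw [← hκ]
    calc n ^ (-(11 : ℝ)) = ((N : ℝ) ^ (-(11 : ℝ))) ^ q := by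
          rw [hn, ← Real.rpow_mul (by positivity), ← Real.rpow_mul (by positivity), mul_comm]
      _ ≤ _ := by gcongr
  have gl : (n / d) ^ (1 / 22 : ℝ) * n / (k : ℝ) ^ 6 ≤ l := by
    rw [← hκ, ← Real.rpow_mul hκ0]
    convert hl using 4
    ring
  have hkq : (k : ℝ) ≤ (k : ℝ) ^ q :=
    Real.self_le_rpow_of_one_le (by exact_mod_cast (by omega : 1 ≤ k)) hq
  have hLk : k * l ≤ L := by
    apply Nat.le_floor
    push_cast
    rw [mul_comm]; gcongr
  have hLle : (L : ℝ) ≤ (l : ℝ) * (k : ℝ) ^ q := Nat.floor_le (by positivity)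
  have hlL : l ≤ L := le_trans (Nat.le_mul_of_pos_left l (by omega)) hLk
  have hfin := final_num n d hn1 hdR g12 g11 k l L hk hLk gl
  rcases (Aset q d N k u l m).eq_empty_or_nonempty with he | ⟨x, hx⟩
  · rw [he]; simp; positivity
  simp only [Aset, Finset.mem_filter] at hx
  obtain ⟨hxB, hxu, hxl, hxm⟩ := hx
  rw [mem_latticeBall_iff q hq, sum_split q hq d k hk, hxu] at hxB
  have c1 : ((Finset.univ.filter (fun i => |x i| = (k : ℤ))).card : ℝ) = l := by
    rw [← hxl]
  have c2 : ((Finset.univ.filter (fun i => |x i| = 1)).card : ℝ) = m := by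
    rw [← hxm]
  rw [c1, c2] at hxB
  have hu : ∀ i, |u i| ≠ 1 ∧ |u i| ≠ (k : ℤ) := by
    intro i
    rw [← hxu]
    unfold uPart
    split_ifs with h
    · rw [abs_zero]; omega
    · exact not_or.1 h
  have hsup := card_supp_le q d u hq
  have hsum : (Finset.univ.filter (fun i => u i = 0)).card
      + (Finset.univ.filter (fun i => u i ≠ 0)).card = d := by
    rw [Finset.card_filter_add_card_filter_not]; simp
  have hup := upper q d N k hk u l m
  have hlow := lower q hq d N k hk u (m + L) hu (by push_cast; linarith)
  set D := (Finset.univ.filter (fun i => u i = 0)).card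
  set s := (Finset.univ.filter (fun i => u i ≠ 0)).card
  have hsumR : (D : ℝ) + s = d := by exact_mod_cast hsum
  have hs0 : (0 : ℝ) ≤ s := Nat.cast_nonneg _
  have hd2 : 2 * n ≤ d := by
    have e : Real.exp (-12) ≤ 1 / 2 := by
      rw [Real.exp_neg, one_div]
      apply inv_anti₀ (by norm_num)
      have := Real.add_one_le_exp (12 : ℝ); linarith
    have := g12.trans e
    rw [div_le_iff₀ hdR] at this
    linarith
  have hml : ((m + L : ℕ) : ℝ) ≤ n := by push_cast; linarith
  have hDR : ((m + L : ℕ) : ℝ) ≤ D := by push_cast; linarith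
  have hb := binom_ineq D l m L hlL n d hdR.le hml (by exact_mod_cast hDR) (by linarith)
  have hP : 0 < (l.factorial : ℝ) * (d : ℝ) ^ (L - l) := by positivity
  apply le_of_mul_le_mul_right _ hP
  calc ((Aset q d N k u l m).card : ℝ) * (l.factorial * (d : ℝ) ^ (L - l))
      ≤ ((D.choose l * ((D - l).choose m * 2 ^ (l + m)) : ℕ) : ℝ)
          * (l.factorial * (d : ℝ) ^ (L - l)) := by
        gcongr
    _ ≤ n ^ L * ((D.choose (m + L) * 2 ^ (m + L) : ℕ) : ℝ) := hb
    _ ≤ n ^ L * ((Aset q d N k u 0 (m + L)).card : ℝ) := by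
        gcongr
    _ ≤ ((36).factorial * n⁻¹ ^ 3 * (l.factorial * (d : ℝ) ^ (L - l)))
          * ((Aset q d N k u 0 (m + L)).card : ℝ) := by
        gcongr
    _ = _ := by ring
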